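/- For every integer m ≥ 3, the number of ST-admissible words of length m over Fin 4 satisfies the recursion N4(m) = 2·N4(m−1) + N4(m−2); moreover N4(1) = 4 and N4(2) = 10 (so that the recursion also holds at m = 2 with the convention N4(0) = 2). -/

import Mathlib

/-!
Once a first pair of adjacent symbols is admissible, what may follow depends only on whether two or
three symbols can come next. A pair with three successors leads to one pair of its own kind and two
of the other; a pair with two successors leads to one pair of each kind. The transfer matrix
`!![1, 2; 1, 1]` has characteristic polynomial `X ^ 2 - 2 * X - 1`, the one of the Pell numbers, and
the count is `N4 m = 2 * pell (m + 1)`; the convention `N4 0 = 2` is its value at `m = 0`.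
-/

namespace STLOCO

/-- Forbidden 2-tuples of `ST⁴`, read left-to-right. -/
def STpair (a b : Fin 4) : Prop :=
  (a = 0 ∧ b = 1) ∨ (a = 1 ∧ b = 0) ∨ (a = 1 ∧ b = 2) ∨
  (a = 2 ∧ b = 1) ∨ (a = 2 ∧ b = 3) ∨ (a = 3 ∧ b = 2)

/-- Forbidden 3-tuples of `ST⁴`, read left-to-right. -/
def STtriple (a x b : Fin 4) : Prop :=
  (a = 0 ∧ x = 3 ∧ b = 0) ∨ (a = 3 ∧ x = 0 ∧ b = 3)

instance (a b : Fin 4) : Decidable (STpair a b) := by unfold STpair; infer_instance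
instance (a x b : Fin 4) : Decidable (STtriple a x b) := by unfold STtriple; infer_instance

/-- A word `w : Fin m → Fin 4` (index `0` is the leftmost symbol) is ST-admissible. -/
def STadm {m : ℕ} (w : Fin m → Fin 4) : Prop :=
  (∀ i j : Fin m, (j : ℕ) = (i : ℕ) + 1 → ¬ STpair (w i) (w j)) ∧
  (∀ i j k : Fin m, (j : ℕ) = (i : ℕ) + 1 → (k : ℕ) = (i : ℕ) + 2 →
    ¬ STtriple (w i) (w j) (w k))

instance {m : ℕ} : DecidablePred (@STadm m) := fun w => by
  unfold STadm; infer_instance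

/-- Number of ST-admissible words of length `m`, with the convention `N4 0 = 2`. -/
def N4 (m : ℕ) : ℕ :=
  if m = 0 then 2
  else (Finset.univ.filter (fun w : Fin m → Fin 4 => STadm w)).card

section AvoidingWords

open Finset Matrix

variable {α : Type*} (P : α → α → Prop) (T : α → α → α → Prop)

/-- The words with no contiguous pair in `P` and no contiguous triple in `T`; `STadm` is
definitionally the case `P = STpair`, `T = STtriple`. -/
def Avoids {m : ℕ} (w : Fin m → α) : Prop :=
  (∀ i j : Fin m, (j : ℕ) = (i : ℕ) + 1 → ¬ P (w i) (w j)) ∧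
  (∀ i j k : Fin m, (j : ℕ) = (i : ℕ) + 1 → (k : ℕ) = (i : ℕ) + 2 → ¬ T (w i) (w j) (w k))

variable {P T} in
theorem avoids_vecCons {m : ℕ} (a : α) (w : Fin (m + 2) → α) :
    Avoids P T (vecCons a w) ↔ (¬ P a (w 0) ∧ ¬ T a (w 0) (w 1)) ∧ Avoids P T w := by
  constructor
  · rintro ⟨hP, hT⟩
    refine ⟨⟨hP 0 1 rfl, hT 0 1 2 rfl rfl⟩, fun i j hij => ?_, fun i j k hij hik => ?_⟩
    · exact hP i.succ j.succ (by simp [hij])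
    · exact hT i.succ j.succ k.succ (by simp [hij]) (by simp [hik])
  · rintro ⟨⟨hPa, hTa⟩, hP, hT⟩
    refine ⟨fun i j hij => ?_, fun i j k hij hik => ?_⟩
    · cases j using Fin.cases with
      | zero => simp at hij
      | succ j =>
        cases i using Fin.cases with
        | zero =>
          obtain rfl : j = 0 := by ext; simpa using hij
          exact hPa
        | succ i => exact hP i j (by simpa using hij)
    · cases j using Fin.cases with
      | zero => simp at hij
      | succ j =>
        cases k using Fin.cases with
        | zero => simp at hik
        | succ k =>
          cases i using Fin.cases with
          | zero =>
            obtain rfl : j = 0 := by ext; simpa using hij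
            obtain rfl : k = 1 := by ext; simpa using hik
            exact hTa
          | succ i => exact hT i j k (by simpa using hij) (by simpa [add_right_comm] using hik)

variable {P T} in
theorem avoids_pair (w : Fin 2 → α) : Avoids P T w ↔ ¬ P (w 0) (w 1) := by
  simp [Avoids, Fin.forall_fin_two]

variable {P T} in
theorem not_avoids_vecCons_vecCons {m : ℕ} {a b : α} (hab : P a b) (w : Fin m → α) :
    ¬ Avoids P T (vecCons a (vecCons b w)) :=
  fun h => h.1 0 1 rfl hab

theorem card_filter_vecCons [Fintype α] {m : ℕ} (p : (Fin (m + 1) → α) → Prop) [DecidablePred p] :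
    #{w | p w} = ∑ a, #{w | p (vecCons a w)} := by
  simp only [card_filter]
  rw [← (Fin.consEquiv fun _ : Fin (m + 1) => α).sum_comp, Fintype.sum_prod_type]
  rfl

variable [DecidableRel P] [∀ a b, DecidablePred (T a b)]

instance {m : ℕ} : DecidablePred (Avoids P T (m := m)) := fun w => by
  unfold Avoids; infer_instance

variable [Fintype α]

/-- The symbols that may follow the adjacent pair `a`, `b` in an avoiding word. -/
def successors (a b : α) : Finset α := {c | ¬ P b c ∧ ¬ T a b c}

/-- The number of avoiding words of length `m + 2` that start with `a`, `b`. -/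
def extensionCount (m : ℕ) (a b : α) : ℕ :=
  #{w : Fin m → α | Avoids P T (vecCons a (vecCons b w))}

variable {P} in
theorem extensionCount_eq_zero (m : ℕ) {a b : α} (hab : P a b) : extensionCount P T m a b = 0 :=
  card_eq_zero.mpr <| filter_eq_empty_iff.mpr fun w _ => not_avoids_vecCons_vecCons hab w

variable {P} in
theorem extensionCount_zero {a b : α} (hab : ¬ P a b) : extensionCount P T 0 a b = 1 := by
  simp [extensionCount, avoids_pair, hab]

variable {P} in
theorem extensionCount_succ (m : ℕ) {a b : α} (hab : ¬ P a b) :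
    extensionCount P T (m + 1) a b = ∑ c ∈ successors P T a b, extensionCount P T m b c := by
  have count_vecCons (c : α) :
      #{w : Fin m → α | Avoids P T (vecCons a (vecCons b (vecCons c w)))} =
        if ¬ P b c ∧ ¬ T a b c then extensionCount P T m b c else 0 := by
    by_cases hbc : P b c
    · simp [avoids_vecCons a, hbc, not_avoids_vecCons_vecCons hbc]
    · by_cases hT : T a b c <;> simp [avoids_vecCons a, hab, hbc, hT, extensionCount]
  rw [extensionCount, card_filter_vecCons, successors, sum_filter]
  exact sum_congr rfl fun c _ => count_vecCons c

theorem card_avoids_add_two (m : ℕ) :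
    #{w : Fin (m + 2) → α | Avoids P T w} =
      ∑ p : α × α with ¬ P p.1 p.2, extensionCount P T m p.1 p.2 := by
  have extensionCount_of_pair (p : α × α) (hp : extensionCount P T m p.1 p.2 ≠ 0) :
      ¬ P p.1 p.2 :=
    fun h => hp (extensionCount_eq_zero T m h)
  rw [sum_filter_of_ne fun p _ => extensionCount_of_pair p, Fintype.sum_prod_type,
    card_filter_vecCons]
  exact sum_congr rfl fun a _ => card_filter_vecCons _

end AvoidingWords

/-- The Pell numbers `0, 1, 2, 5, 12, 29, …`. -/
def pell : ℕ → ℕ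
  | 0 => 0
  | 1 => 1
  | n + 2 => 2 * pell (n + 1) + pell n

section Counting

open Finset

/-- The adjacent pairs with three successors, the most that occur; every other admissible pair has
two. -/
def IsBranching (a b : Fin 4) : Prop := #(successors STpair STtriple a b) = 3

instance : DecidableRel IsBranching := fun a b => by unfold IsBranching; infer_instance

theorem card_branching_successors :
    ∀ a b, ¬ STpair a b → #{c ∈ successors STpair STtriple a b | IsBranching b c} = 1 := by
  decide

theorem card_nonbranching_successors :
    ∀ a b, ¬ STpair a b → #{c ∈ successors STpair STtriple a b | ¬ IsBranching b c} =
      if IsBranching a b then 2 else 1 := by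
  decide

theorem extensionCount_eq_pell (m : ℕ) {a b : Fin 4} (hab : ¬ STpair a b) :
    extensionCount STpair STtriple m a b =
      if IsBranching a b then pell (m + 1) + pell m else pell (m + 1) := by
  induction m generalizing a b with
  | zero => simp [extensionCount_zero STtriple hab, pell]
  | succ m ih =>
    have count_successor : ∀ c ∈ successors STpair STtriple a b,
        extensionCount STpair STtriple m b c =
          if IsBranching b c then pell (m + 1) + pell m else pell (m + 1) :=
      fun c hc => ih (mem_filter.mp hc).2.1
    rw [extensionCount_succ STtriple m hab, sum_congr rfl count_successor, sum_ite, sum_const,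
      sum_const, card_branching_successors a b hab, card_nonbranching_successors a b hab]
    split_ifs <;> simp only [pell, smul_eq_mul] <;> ring

theorem N4_eq_two_mul_pell : ∀ m : ℕ, N4 m = 2 * pell (m + 1)
  | 0 => rfl
  | 1 => by decide
  | m + 2 => by
    have card_branching :
        #{p ∈ {p : Fin 4 × Fin 4 | ¬ STpair p.1 p.2} | IsBranching p.1 p.2} = 4 := by decide
    have card_nonbranching :
        #{p ∈ {p : Fin 4 × Fin 4 | ¬ STpair p.1 p.2} | ¬ IsBranching p.1 p.2} = 6 := by decide
    calc N4 (m + 2)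
      _ = ∑ p : Fin 4 × Fin 4 with ¬ STpair p.1 p.2, extensionCount STpair STtriple m p.1 p.2 :=
        card_avoids_add_two STpair STtriple m
      _ = ∑ p : Fin 4 × Fin 4 with ¬ STpair p.1 p.2,
            if IsBranching p.1 p.2 then pell (m + 1) + pell m else pell (m + 1) :=
        sum_congr rfl fun p hp => extensionCount_eq_pell m (mem_filter.mp hp).2
      _ = 4 * (pell (m + 1) + pell m) + 6 * pell (m + 1) := by
        rw [sum_ite, sum_const, sum_const, card_branching, card_nonbranching, smul_eq_mul,
          smul_eq_mul]
      _ = 2 * pell (m + 2 + 1) := by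
        simp only [pell]
        ring

end Counting

theorem N4_recursion :
    (∀ m : ℕ, 2 ≤ m → N4 m = 2 * N4 (m - 1) + N4 (m - 2)) ∧
    N4 1 = 4 ∧ N4 2 = 10 := by
  refine ⟨fun m hm => ?_, N4_eq_two_mul_pell 1, N4_eq_two_mul_pell 2⟩
  obtain ⟨n, rfl⟩ := Nat.exists_eq_add_of_le' hm
  calc N4 (n + 2)
    _ = 2 * (2 * pell (n + 2) + pell (n + 1)) := N4_eq_two_mul_pell (n + 2)
    _ = 2 * (2 * pell (n + 2)) + 2 * pell (n + 1) := mul_add ..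
    _ = 2 * N4 (n + 1) + N4 n := by rw [N4_eq_two_mul_pell (n + 1), N4_eq_two_mul_pell n]

end STLOCO
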